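/- arXiv:2604.21114 — 3 statements merged into one kernel-verified Lean document; each statement's English description precedes it below -/
import Mathlib

section
/- Let E and F be real Banach spaces, let L : E → F and P : F → E be continuous linear maps such that L (P f) = f for all f ∈ F (P is a bounded right inverse of L). Let θ ∈ F, let ε > 0 and C ≥ 0, and let Q : E → F be a map with Q 0 = 0 satisfying the quadratic Lipschitz estimate ‖Q ν₁ − Q ν₂‖ ≤ C (‖ν₁‖ + ‖ν₂‖) ‖ν₁ − ν₂‖ for all ν₁, ν₂ ∈ E with ‖ν₁‖ ≤ ε and ‖ν₂‖ ≤ ε. Assume ‖P‖ ‖θ‖ ≤ ε/4 and 2 C ‖P‖ ε ≤ 1/2. Then there exists ν ∈ E with ‖ν‖ ≤ ε such that θ + L ν + Q ν = 0. -/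
/-!
On the closed ball of radius `ε` the map `N ν = -P (θ + Q ν)` is `1/2`-Lipschitz, since there
`‖P‖ C (‖ν₁‖ + ‖ν₂‖) ≤ 2 C ‖P‖ ε ≤ 1/2`. As `‖N 0‖ = ‖P θ‖ ≤ ε / 4`, it maps the ball into itself,
so the Banach fixed point theorem gives `ν = -P (θ + Q ν)`. Applying `L` and using `L ∘ P = id`
yields `L ν = -(θ + Q ν)`.
-/

/-- The analytic core of the perturbation argument: given a bounded right inverse `P` of `L`,
a small datum `θ`, and a nonlinearity `Q` with a quadratic Lipschitz estimate, there is a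
solution `ν` of `θ + L ν + Q ν = 0` in the ball of radius `ε`. -/
theorem stmt_0 {E F : Type*} [NormedAddCommGroup E] [NormedSpace ℝ E] [CompleteSpace E]
    [NormedAddCommGroup F] [NormedSpace ℝ F]
    (L : E →L[ℝ] F) (P : F →L[ℝ] E) (hLP : ∀ f : F, L (P f) = f)
    (θ : F) (ε C : ℝ) (hε : 0 < ε) (hC : 0 ≤ C)
    (Q : E → F) (hQ0 : Q 0 = 0)
    (hQ : ∀ ν₁ ν₂ : E, ‖ν₁‖ ≤ ε → ‖ν₂‖ ≤ ε →
      ‖Q ν₁ - Q ν₂‖ ≤ C * (‖ν₁‖ + ‖ν₂‖) * ‖ν₁ - ν₂‖)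
    (hθ : ‖P‖ * ‖θ‖ ≤ ε / 4)
    (hsmall : 2 * C * ‖P‖ * ε ≤ 1 / 2) :
    ∃ ν : E, ‖ν‖ ≤ ε ∧ θ + L ν + Q ν = 0 := by
  set N : E → E := fun ν => -P (θ + Q ν) with hN
  have hcontr : ∀ ν₁ ν₂ : E, ‖ν₁‖ ≤ ε → ‖ν₂‖ ≤ ε → ‖N ν₁ - N ν₂‖ ≤ 1 / 2 * ‖ν₁ - ν₂‖ := by
    intro ν₁ ν₂ h₁ h₂
    have hdiff : N ν₁ - N ν₂ = -P (Q ν₁ - Q ν₂) := by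
      simp only [hN, map_add, map_sub]
      abel
    calc ‖N ν₁ - N ν₂‖ = ‖P (Q ν₁ - Q ν₂)‖ := by rw [hdiff, norm_neg]
      _ ≤ ‖P‖ * ‖Q ν₁ - Q ν₂‖ := P.le_opNorm _
      _ ≤ ‖P‖ * (C * (‖ν₁‖ + ‖ν₂‖) * ‖ν₁ - ν₂‖) := by gcongr; exact hQ ν₁ ν₂ h₁ h₂
      _ ≤ ‖P‖ * (C * (ε + ε) * ‖ν₁ - ν₂‖) := by gcongr
      _ = 2 * C * ‖P‖ * ε * ‖ν₁ - ν₂‖ := by ring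
      _ ≤ 1 / 2 * ‖ν₁ - ν₂‖ := by gcongr
  have hmaps : Set.MapsTo N (Metric.closedBall 0 ε) (Metric.closedBall 0 ε) := by
    intro ν hν
    rw [mem_closedBall_zero_iff] at hν ⊢
    have hN0 : ‖N 0‖ ≤ ε / 4 := by
      simpa [hN, hQ0] using (P.le_opNorm θ).trans hθ
    have hdist := hcontr ν 0 hν (by simpa using hε.le)
    rw [sub_zero] at hdist
    have htri := norm_le_norm_sub_add (N ν) (N 0)
    linarith
  have hK : ContractingWith (1 / 2) (hmaps.restrict N _ _) := by
    refine ⟨by norm_num, LipschitzWith.of_dist_le_mul fun x y => ?_⟩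
    have h := hcontr x y (mem_closedBall_zero_iff.1 x.2) (mem_closedBall_zero_iff.1 y.2)
    simpa [Subtype.dist_eq, dist_eq_norm] using h
  obtain ⟨ν, hν, hfix, -⟩ := hK.exists_fixedPoint' Metric.isClosed_closedBall.isComplete hmaps
    (Metric.mem_closedBall_self hε.le) (edist_ne_top _ _)
  refine ⟨ν, mem_closedBall_zero_iff.1 hν, ?_⟩
  have hL : L ν = -(θ + Q ν) := by
    calc L ν = L (N ν) := by rw [hfix.eq]
      _ = -(θ + Q ν) := by simp only [hN, map_neg, hLP]
  rw [hL]
  abel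
end

section
/- Let n ≥ 1 and a ≥ 1 be natural numbers, let u, β ∈ ℝ, let M be an n × n real matrix with det M ≠ 0, and let p, b ∈ ℝⁿ. Consider the (n+1) × (n+1) complex matrix N defined in block form by: N_{i k} = u^a M_{i k} for 1 ≤ i, k ≤ n; N_{i, n+1} = a u^{a−1} p_i for 1 ≤ i ≤ n; N_{n+1, k} = −2a u^{2a−1} b_k · i for 1 ≤ k ≤ n; and N_{n+1, n+1} = 1 − 2a(2a−1) u^{2a−2} β · i (real entries regarded as complex numbers, i the imaginary unit). Then det N = u^{n a} · det M · ( 1 + u^{2a−2} · ( 2a² (bᵀ M⁻¹ p) − 2a(2a−1) β ) · i ), where bᵀ M⁻¹ p denotes the real scalar Σ_{k,l} b_k (M⁻¹)_{k l} p_l regarded as a complex number. -/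
/-!
The first `n` columns of the matrix are all divisible by `u ^ a` (the bottom row because
`2a - 1 = (a - 1) + a`), so it factors as a block matrix with upper-left block `M` times
`diag(u ^ a, …, u ^ a, 1)`. The second factor has determinant `u ^ (n a)`. The first is computed by
the Schur complement of the invertible block `M`, in which the two remaining powers `u ^ (a - 1)`
multiply to `u ^ (2a - 2)`. Factoring before inverting makes the argument valid for `u = 0` too.
-/

open Matrix

/-- The determinant identity at the heart of the Lagrangian angle computation for the
Lagrangian correction `X₂`: with blocks `u^a M`, `a u^(a-1) p`, `-2a u^(2a-1) i b` and
`1 - 2a(2a-1) u^(2a-2) β i`, the determinant equals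
`u^(na) det M (1 + u^(2a-2)(2a² bᵀM⁻¹p − 2a(2a−1)β) i)`. -/
theorem stmt_8 (n a : ℕ) (hn : 1 ≤ n) (ha : 1 ≤ a) (u β : ℝ)
    (M : Matrix (Fin n) (Fin n) ℝ) (hM : M.det ≠ 0) (p b : Fin n → ℝ) :
    (Matrix.fromBlocks
        (Matrix.of fun i k : Fin n => ((u ^ a * M i k : ℝ) : ℂ))
        (Matrix.of fun (i : Fin n) (_ : Unit) => (((a : ℝ) * u ^ (a - 1) * p i : ℝ) : ℂ))
        (Matrix.of fun (_ : Unit) (k : Fin n) =>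
          -(((2 * (a : ℝ)) * u ^ (2 * a - 1) * b k : ℝ) : ℂ) * Complex.I)
        (Matrix.of fun (_ : Unit) (_ : Unit) =>
          1 - (((2 * (a : ℝ) * (2 * (a : ℝ) - 1)) * u ^ (2 * a - 2) * β : ℝ) : ℂ)
            * Complex.I)).det
      = (u : ℂ) ^ (n * a) * ((M.det : ℝ) : ℂ) *
        (1 + (u : ℂ) ^ (2 * a - 2) *
          (((2 * (a : ℝ) ^ 2 * (∑ k, ∑ l, b k * M⁻¹ k l * p l)
              - 2 * (a : ℝ) * (2 * (a : ℝ) - 1) * β : ℝ) : ℂ)) * Complex.I) := by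
  set A : Matrix (Fin n) (Fin n) ℂ := M.map Complex.ofRealHom with hA
  set B : Matrix (Fin n) Unit ℂ :=
    Matrix.of fun i _ => (((a : ℝ) * u ^ (a - 1) * p i : ℝ) : ℂ) with hB
  set D : Matrix Unit Unit ℂ := Matrix.of fun _ _ =>
    1 - (((2 * (a : ℝ) * (2 * (a : ℝ) - 1)) * u ^ (2 * a - 2) * β : ℝ) : ℂ) * Complex.I with hD
  -- The bottom-left block with the common factor `u ^ a` removed.
  let C : Matrix Unit (Fin n) ℂ := Matrix.of fun _ k =>
    -(((2 * (a : ℝ)) * u ^ (a - 1) * b k : ℝ) : ℂ) * Complex.I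
  have hA_det : A.det = ((M.det : ℝ) : ℂ) := (RingHom.map_det Complex.ofRealHom M).symm
  have hA_mul : A * M⁻¹.map Complex.ofRealHom = 1 := by
    rw [hA, ← Matrix.map_mul, Matrix.mul_nonsing_inv M (isUnit_iff_ne_zero.mpr hM)]
    simp
  let _ : Invertible A := ⟨_, mul_eq_one_comm.mp hA_mul, hA_mul⟩
  have hA_inv : ⅟A = M⁻¹.map Complex.ofRealHom := invOf_eq_right_inv hA_mul
  have h_factor : Matrix.fromBlocks
      (Matrix.of fun i k : Fin n => ((u ^ a * M i k : ℝ) : ℂ)) B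
      (Matrix.of fun (_ : Unit) (k : Fin n) =>
        -(((2 * (a : ℝ)) * u ^ (2 * a - 1) * b k : ℝ) : ℂ) * Complex.I) D
      = Matrix.fromBlocks A B C D *
        Matrix.fromBlocks (((u : ℂ) ^ a) • (1 : Matrix (Fin n) (Fin n) ℂ)) 0 0
          (1 : Matrix Unit Unit ℂ) := by
    have hpow : 2 * a - 1 = (a - 1) + a := by omega
    rw [Matrix.fromBlocks_multiply]
    congr 1
    · ext i k
      simp [hA]
    · simp
    · ext i k
      simp [C, hpow, pow_add]
      ring
    · simp
  have h_schur : (D - C * ⅟A * B).det = 1 + (u : ℂ) ^ (2 * a - 2) *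
      (((2 * (a : ℝ) ^ 2 * (∑ k, ∑ l, b k * M⁻¹ k l * p l)
        - 2 * (a : ℝ) * (2 * (a : ℝ) - 1) * β : ℝ) : ℂ)) * Complex.I := by
    have hpow : 2 * a - 2 = (a - 1) + (a - 1) := by omega
    have h_prod : (C * ⅟A * B) () () = -((u : ℂ) ^ (2 * a - 2) * (2 * (a : ℂ) ^ 2 *
        ∑ k, ∑ l, (b k : ℂ) * ((M⁻¹ k l : ℝ) : ℂ) * (p l : ℂ)) * Complex.I) := by
      rw [Matrix.mul_assoc, hA_inv]
      simp only [Matrix.mul_apply, C, hB, Matrix.of_apply, Matrix.map_apply,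
        Complex.ofRealHom_eq_coe, Finset.mul_sum, Finset.sum_mul, ← Finset.sum_neg_distrib]
      refine Finset.sum_congr rfl fun k _ => Finset.sum_congr rfl fun l _ => ?_
      rw [hpow]
      push_cast
      ring
    rw [Matrix.det_unique]
    change D () () - (C * ⅟A * B) () () = _
    rw [h_prod, hD, Matrix.of_apply]
    push_cast
    ring
  rw [h_factor, Matrix.det_mul, Matrix.det_fromBlocks₁₁, h_schur, hA_det,
    Matrix.det_fromBlocks_zero₂₁, Matrix.det_smul, Matrix.det_one, Matrix.det_one, Fintype.card_fin,
    ← pow_mul, mul_comm a n]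
  ring
end

section
/- Let E and F be real Banach spaces, let p be a formal multilinear series from E to F with p₀ = 0 and p₁ = 0, let f : E → F, and suppose f has p as a power series on the ball of radius R > 0 centered at 0 (in the sense of HasFPowerSeriesOnBall). Let r > 0 with 2r < R. Then there exists a constant C ≥ 0 such that for all x, y ∈ E with ‖x‖ ≤ r and ‖y‖ ≤ r, ‖f(x) − f(y)‖ ≤ C · (‖x‖ + ‖y‖) · ‖x − y‖. In particular f(0) = 0 and ‖f(x)‖ ≤ C ‖x‖² for ‖x‖ ≤ r. -/
/-- Quadratic Lipschitz estimate for a sum of a power series with vanishing constant and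
linear terms: if `f` has such a power series on a ball of radius `R > 0` and `2r < R`, then
`‖f x − f y‖ ≤ C (‖x‖ + ‖y‖) ‖x − y‖` on the ball of radius `r`; in particular `f 0 = 0` and
`‖f x‖ ≤ C ‖x‖²` there. -/
theorem stmt_13 {E F : Type*} [NormedAddCommGroup E] [NormedSpace ℝ E]
    [NormedAddCommGroup F] [NormedSpace ℝ F]
    (p : FormalMultilinearSeries ℝ E F) (hp0 : p 0 = 0) (hp1 : p 1 = 0)
    (f : E → F) (R : ENNReal) (hR : 0 < R)
    (hf : HasFPowerSeriesOnBall f p 0 R)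
    (r : ℝ) (hr : 0 < r) (h2r : ENNReal.ofReal (2 * r) < R) :
    ∃ C : ℝ, 0 ≤ C ∧
      (∀ x y : E, ‖x‖ ≤ r → ‖y‖ ≤ r → ‖f x - f y‖ ≤ C * (‖x‖ + ‖y‖) * ‖x - y‖) ∧
      f 0 = 0 ∧ ∀ x : E, ‖x‖ ≤ r → ‖f x‖ ≤ C * ‖x‖ ^ 2 := by
  -- With `p 1 = 0`, the bound for `f y - f z - p 1 (y - z)` on a ball strictly inside the ball of
  -- convergence is already the quadratic Lipschitz estimate, and the open ball of radius `2 * r`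
  -- contains the closed ball of radius `r`.
  obtain ⟨C, hC⟩ := hf.image_sub_sub_deriv_le h2r
  have hmem : ∀ x : E, ‖x‖ ≤ r → x ∈ Metric.eball (0 : E) (ENNReal.ofReal (2 * r)) := by
    intro x hx
    rw [Metric.eball_ofReal, mem_ball_zero_iff]
    linarith
  have hf0 : f 0 = 0 := by
    rw [← hf.coeff_zero (fun _ => 0), hp0]
    rfl
  have hlip : ∀ x y : E, ‖x‖ ≤ r → ‖y‖ ≤ r →
      ‖f x - f y‖ ≤ |C| * (‖x‖ + ‖y‖) * ‖x - y‖ := by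
    intro x y hx hy
    have h := hC x (hmem x hx) y (hmem y hy)
    simp only [hp1, zero_apply, sub_zero] at h
    refine h.trans ?_
    gcongr
    · exact le_abs_self C
    · exact max_le_add_of_nonneg (norm_nonneg x) (norm_nonneg y)
  refine ⟨|C|, abs_nonneg C, hlip, hf0, fun x hx => ?_⟩
  have h := hlip x 0 hx (by simpa using hr.le)
  simpa [hf0, pow_two, mul_assoc] using h
end
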